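/- Let I ⊆ ℝ be an open nontrivial interval and let f, g, h : I → ℝ be continuous and strictly monotone. Suppose f and g are differentiable at every point of I and that A^[f] ≤ A^[h] ≤ A^[g]. Then h is differentiable at every point of I. -/

import Mathlib

/-!
Replacing a generator by its negative does not change its mean, so all three generators may be
taken strictly increasing. Then `A^[f] ≤ A^[h]` is Jensen's inequality for `h ∘ f⁻¹` with equal
weights, and a monotone function satisfying it is convex. The supporting line of `h ∘ f⁻¹` at `f z`
gives `m * (f x - f z) ≤ h x - h z` on `I`. In the same way `A^[h] ≤ A^[g]` gives
`h x - h z ≤ M * (g x - g z)`. So `h` is squeezed near `z` between two functions differentiable at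
`z` that touch there; their difference has a local minimum at `z`, so their derivatives at `z`
agree, and this is the derivative of `h`.
-/

open Set Function Filter

/-- The quasi-arithmetic mean generated by `f` on the interval `I`,
applied to a vector `a ∈ Iⁿ`: `f⁻¹((f a₁ + ⋯ + f aₙ)/n)`, where the
inverse of `f` is taken on `I`. -/
noncomputable def qam (I : Set ℝ) (f : ℝ → ℝ) {n : ℕ} (a : Fin n → ℝ) : ℝ :=
  Function.invFunOn f I ((∑ i, f (a i)) / n)

/-- The natural (pointwise) partial order on quasi-arithmetic means:
`A^[f] ≤ A^[g]` iff `A^[f](a) ≤ A^[g](a)` for every `n ≥ 1` and every `a ∈ Iⁿ`. -/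
def qamLE (I : Set ℝ) (f g : ℝ → ℝ) : Prop :=
  ∀ n : ℕ, 1 ≤ n → ∀ a : Fin n → ℝ, (∀ i, a i ∈ I) → qam I f a ≤ qam I g a

/-- `A^[f] = A^[g]` : equality of the two quasi-arithmetic means as means. -/
def qamEQ (I : Set ℝ) (f g : ℝ → ℝ) : Prop :=
  ∀ n : ℕ, 1 ≤ n → ∀ a : Fin n → ℝ, (∀ i, a i ∈ I) → qam I f a = qam I g a

/-- `f` is strictly monotone on `I` (strictly increasing or strictly decreasing). -/
def StrictMonoOrAntiOn (f : ℝ → ℝ) (I : Set ℝ) : Prop :=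
  StrictMonoOn f I ∨ StrictAntiOn f I

theorem sum_ite_val_lt_div_card {K : Type*} [Field K] [CharZero K] {n k : ℕ} (hn : 1 ≤ n)
    (hk : k ≤ n) (x y : K) :
    (∑ i : Fin n, if (i : ℕ) < k then y else x) / n = (1 - (k : K) / n) * x + (k : K) / n * y := by
  have hn0 : (n : K) ≠ 0 := Nat.cast_ne_zero.2 (Nat.one_le_iff_ne_zero.1 hn)
  rw [Fin.sum_univ_eq_sum_range (fun i => if i < k then y else x) n,
    ← Finset.sum_range_add_sum_Ico _ hk,
    Finset.sum_congr rfl fun i hi => if_pos (Finset.mem_range.1 hi),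
    Finset.sum_congr rfl fun i hi => if_neg (Finset.mem_Ico.1 hi).1.not_gt]
  simp only [Finset.sum_const, Finset.card_range, Nat.card_Ico, nsmul_eq_mul, Nat.cast_sub hk]
  field_simp
  ring

theorem convexOn_of_monotoneOn_of_mean_le {s : Set ℝ} {φ : ℝ → ℝ} (hs : Convex ℝ s)
    (hφ : MonotoneOn φ s)
    (hmean : ∀ n : ℕ, 1 ≤ n → ∀ u : Fin n → ℝ, (∀ i, u i ∈ s) →
      φ ((∑ i, u i) / n) ≤ (∑ i, φ (u i)) / n) :
    ConvexOn ℝ s φ := by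
  refine LinearOrder.convexOn_of_lt hs fun x hx y hy hxy a b ha hb hab => ?_
  obtain rfl : a = 1 - b := eq_sub_of_add_eq hab
  simp only [smul_eq_mul]
  have hb1 : b ≤ 1 := (sub_pos.1 ha).le
  -- Round `b` up to the weights `⌈b * n⌉₊ / n`: as `φ` is monotone and `x < y`, this can only
  -- increase the left-hand side.
  have hlim : Tendsto (fun n : ℕ => (⌈b * n⌉₊ : ℝ) / n) atTop (nhds b) :=
    (tendsto_nat_ceil_mul_div_atTop hb.le).comp tendsto_natCast_atTop_atTop
  refine ge_of_tendsto (((hlim.const_sub 1).mul_const (φ x)).add (hlim.mul_const (φ y))) ?_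
  filter_upwards [eventually_ge_atTop 1] with n hn
  have hn0 : (0 : ℝ) < n := by exact_mod_cast hn
  have hk : ⌈b * n⌉₊ ≤ n := Nat.ceil_le.2 (mul_le_of_le_one_left hn0.le hb1)
  have hbk : b ≤ (⌈b * n⌉₊ : ℝ) / n := (le_div_iff₀ hn0).2 (Nat.le_ceil _)
  have hk1 : (⌈b * n⌉₊ : ℝ) / n ≤ 1 := div_le_one_of_le₀ (by exact_mod_cast hk) hn0.le
  generalize ⌈b * n⌉₊ = k at *
  have hpoint : (1 - b) * x + b * y ≤ (1 - (k : ℝ) / n) * x + (k : ℝ) / n * y := by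
    linarith [mul_le_mul_of_nonneg_right hbk (sub_pos.2 hxy).le]
  calc φ ((1 - b) * x + b * y)
      ≤ φ ((1 - (k : ℝ) / n) * x + (k : ℝ) / n * y) :=
        hφ (hs hx hy ha.le hb.le hab)
          (hs hx hy (sub_nonneg.2 hk1) (hb.le.trans hbk) (sub_add_cancel _ _)) hpoint
    _ = φ ((∑ i : Fin n, if (i : ℕ) < k then y else x) / n) := by
        rw [sum_ite_val_lt_div_card hn hk]
    _ ≤ (∑ i : Fin n, φ (if (i : ℕ) < k then y else x)) / n :=
        hmean n hn _ fun i => by split_ifs <;> assumption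
    _ = (1 - (k : ℝ) / n) * φ x + (k : ℝ) / n * φ y := by
        simp only [apply_ite φ, sum_ite_val_lt_div_card hn hk]

theorem rightDeriv_mul_sub_le_sub_of_convexOn {s : Set ℝ} {φ : ℝ → ℝ} (hφ : ConvexOn ℝ s φ)
    {x y : ℝ} (hx : x ∈ interior s) (hy : y ∈ s) :
    derivWithin φ (Ioi x) x * (y - x) ≤ φ y - φ x := by
  rcases lt_trichotomy y x with hyx | rfl | hxy
  · have hslope : slope φ y x ≤ derivWithin φ (Ioi x) x :=
      (hφ.slope_le_leftDeriv_of_mem_interior hy hx hyx).trans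
        (hφ.leftDeriv_le_rightDeriv_of_mem_interior hx)
    rw [slope_def_field, div_le_iff₀ (sub_pos.2 hyx)] at hslope
    linarith
  · simp
  · have hslope := hφ.rightDeriv_le_slope_of_mem_interior hx hy hxy
    rwa [slope_def_field, le_div_iff₀ (sub_pos.2 hxy)] at hslope

theorem monotoneOn_invFunOn {α β : Type*} [LinearOrder α] [Nonempty α] [Preorder β] {s : Set α}
    {f : α → β} (hf : StrictMonoOn f s) : MonotoneOn (invFunOn f s) (f '' s) := by
  intro u hu v hv huv
  rwa [← hf.le_iff_le (invFunOn_mem hu) (invFunOn_mem hv), invFunOn_eq hu, invFunOn_eq hv]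

theorem convex_image_of_isPreconnected {X : Type*} [TopologicalSpace X] {s : Set X} {f : X → ℝ}
    (hs : IsPreconnected s) (hf : ContinuousOn f s) : Convex ℝ (f '' s) :=
  (hs.image f hf).ordConnected.convex

theorem mean_mem_image_of_isPreconnected {X : Type*} [TopologicalSpace X] {s : Set X} {f : X → ℝ}
    (hs : IsPreconnected s) (hf : ContinuousOn f s) {n : ℕ} (hn : 1 ≤ n) {a : Fin n → X}
    (ha : ∀ i, a i ∈ s) : (∑ i, f (a i)) / n ∈ f '' s := by
  have hn0 : (n : ℝ) ≠ 0 := by positivity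
  have hmem := (convex_image_of_isPreconnected hs hf).sum_mem (t := Finset.univ)
    (w := fun _ : Fin n => (n : ℝ)⁻¹) (fun _ _ => by positivity) (by simp [hn0])
    fun i _ => mem_image_of_mem f (ha i)
  rwa [← Finset.smul_sum, smul_eq_mul, inv_mul_eq_div] at hmem

theorem image_mem_nhds_of_strictMonoOn {α β : Type*} [ConditionallyCompleteLinearOrder α]
    [TopologicalSpace α] [OrderTopology α] [DenselyOrdered α] [NoMinOrder α] [NoMaxOrder α]
    [LinearOrder β] [TopologicalSpace β] [OrderTopology β] {s : Set α} {f : α → β}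
    (hf : StrictMonoOn f s) (hfc : ContinuousOn f s) {x : α} (hs : s ∈ nhds x) :
    f '' s ∈ nhds (f x) := by
  obtain ⟨a, b, hx, hab, hsub⟩ := exists_Icc_mem_subset_of_mem_nhds hs
  obtain ⟨hax, hxb⟩ := Icc_mem_nhds_iff.1 hab
  have ha : a ∈ s := hsub ⟨le_rfl, (hax.trans hxb).le⟩
  have hb : b ∈ s := hsub ⟨(hax.trans hxb).le, le_rfl⟩
  have himage : Icc (f a) (f b) ⊆ f '' s :=
    (intermediate_value_Icc (hax.trans hxb).le (hfc.mono hsub)).trans (image_mono hsub)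
  exact mem_of_superset (Icc_mem_nhds (hf ha (hsub hx) hax) (hf (hsub hx) hb hxb)) himage

theorem hasFDerivAt_of_le_of_le {E : Type*} [NormedAddCommGroup E] [NormedSpace ℝ E]
    {u h v : E → ℝ} {L : E →L[ℝ] ℝ} {x : E} (hu : HasFDerivAt u L x) (hv : HasFDerivAt v L x)
    (hux : u x = h x) (hvx : v x = h x) (huh : ∀ᶠ y in nhds x, u y ≤ h y)
    (hhv : ∀ᶠ y in nhds x, h y ≤ v y) : HasFDerivAt h L x := by
  rw [hasFDerivAt_iff_isLittleO] at hu hv ⊢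
  refine (Asymptotics.IsBigO.of_norm_eventuallyLE ?_).trans_isLittleO
    (hu.norm_left.add hv.norm_left)
  filter_upwards [huh, hhv] with y hy₁ hy₂
  have hlower : u y - u x - L (y - x) ≤ h y - h x - L (y - x) := by linarith
  have hupper : h y - h x - L (y - x) ≤ v y - v x - L (y - x) := by linarith
  exact (abs_le_max_abs_abs hlower hupper).trans
    (max_le_add_of_nonneg (abs_nonneg _) (abs_nonneg _))

theorem differentiableAt_of_le_of_le {E : Type*} [NormedAddCommGroup E] [NormedSpace ℝ E]
    {u h v : E → ℝ} {x : E} (hu : DifferentiableAt ℝ u x) (hv : DifferentiableAt ℝ v x)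
    (hux : u x = h x) (hvx : v x = h x) (huh : ∀ᶠ y in nhds x, u y ≤ h y)
    (hhv : ∀ᶠ y in nhds x, h y ≤ v y) : DifferentiableAt ℝ h x := by
  have hmin : IsLocalMin (v - u) x := by
    filter_upwards [huh, hhv] with y hy₁ hy₂
    simp only [Pi.sub_apply, hux, hvx]
    linarith
  have hderiv : fderiv ℝ v x = fderiv ℝ u x :=
    sub_eq_zero.1 (hmin.hasFDerivAt_eq_zero (hv.hasFDerivAt.sub hu.hasFDerivAt))
  exact (hasFDerivAt_of_le_of_le hu.hasFDerivAt (hderiv ▸ hv.hasFDerivAt) hux hvx huh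
    hhv).differentiableAt

section QuasiArithmeticMean

variable {I : Set ℝ} {f g h : ℝ → ℝ}

theorem qam_neg (I : Set ℝ) (f : ℝ → ℝ) {n : ℕ} (a : Fin n → ℝ) : qam I (-f) a = qam I f a := by
  -- `invFunOn` chooses from the set of preimages in `I`, which is the same on both sides, so
  -- this holds whether or not a preimage exists.
  have hinv (v : ℝ) : invFunOn (-f) I (-v) = invFunOn f I v := by
    unfold invFunOn
    congr! 3 <;> simp only [Pi.neg_apply, neg_inj]
  simp only [qam, Pi.neg_apply, Finset.sum_neg_distrib, neg_div, hinv]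

theorem qamLE_neg_left : qamLE I (-f) g ↔ qamLE I f g := by
  simp only [qamLE, qam_neg]

theorem qamLE_neg_right : qamLE I f (-g) ↔ qamLE I f g := by
  simp only [qamLE, qam_neg]

theorem qam_mem (hI : I.OrdConnected) (hf : ContinuousOn f I) {n : ℕ} (hn : 1 ≤ n)
    {a : Fin n → ℝ} (ha : ∀ i, a i ∈ I) : qam I f a ∈ I :=
  invFunOn_mem (mean_mem_image_of_isPreconnected hI.isPreconnected hf hn ha)

theorem apply_qam (hI : I.OrdConnected) (hf : ContinuousOn f I) {n : ℕ} (hn : 1 ≤ n)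
    {a : Fin n → ℝ} (ha : ∀ i, a i ∈ I) : f (qam I f a) = (∑ i, f (a i)) / n :=
  invFunOn_eq (mean_mem_image_of_isPreconnected hI.isPreconnected hf hn ha)

theorem qamLE.apply_qam_le (hle : qamLE I f h) (hI : I.OrdConnected) (hfc : ContinuousOn f I)
    (hhc : ContinuousOn h I) (hh : MonotoneOn h I) {n : ℕ} (hn : 1 ≤ n) {a : Fin n → ℝ}
    (ha : ∀ i, a i ∈ I) : h (qam I f a) ≤ (∑ i, h (a i)) / n := by
  rw [← apply_qam hI hhc hn ha]
  exact hh (qam_mem hI hfc hn ha) (qam_mem hI hhc hn ha) (hle n hn a ha)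

theorem qamLE.convexOn_comp_invFunOn (hle : qamLE I f h) (hI : I.OrdConnected)
    (hfc : ContinuousOn f I) (hhc : ContinuousOn h I) (hf : StrictMonoOn f I)
    (hh : MonotoneOn h I) : ConvexOn ℝ (f '' I) (h ∘ invFunOn f I) := by
  refine convexOn_of_monotoneOn_of_mean_le (convex_image_of_isPreconnected hI.isPreconnected hfc)
    (hh.comp (monotoneOn_invFunOn hf) fun _ => invFunOn_mem) fun n hn u hu => ?_
  have hmean := hle.apply_qam_le hI hfc hhc hh hn fun i => invFunOn_mem (hu i)
  simpa only [qam, comp_apply, fun i => invFunOn_eq (hu i)] using hmean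

theorem qamLE.exists_mul_sub_le_sub (hle : qamLE I f h) (hI : I.OrdConnected)
    (hfc : ContinuousOn f I) (hhc : ContinuousOn h I) (hf : StrictMonoOn f I)
    (hh : MonotoneOn h I) {z : ℝ} (hz : I ∈ nhds z) :
    ∃ m : ℝ, ∀ x ∈ I, m * (f x - f z) ≤ h x - h z := by
  have hconv := hle.convexOn_comp_invFunOn hI hfc hhc hf hh
  have hfz : f z ∈ interior (f '' I) :=
    mem_interior_iff_mem_nhds.2 (image_mem_nhds_of_strictMonoOn hf hfc hz)
  refine ⟨derivWithin (h ∘ invFunOn f I) (Ioi (f z)) (f z), fun x hx => ?_⟩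
  have hsupport := rightDeriv_mul_sub_le_sub_of_convexOn hconv hfz (mem_image_of_mem f hx)
  simpa only [comp_apply, hf.injOn.leftInvOn_invFunOn hx,
    hf.injOn.leftInvOn_invFunOn (mem_of_mem_nhds hz)] using hsupport

theorem qamLE.exists_sub_le_mul_sub (hle : qamLE I h g) (hI : I.OrdConnected)
    (hhc : ContinuousOn h I) (hgc : ContinuousOn g I) (hh : StrictMonoOn h I)
    (hg : StrictMonoOn g I) {z : ℝ} (hz : I ∈ nhds z) :
    ∃ M : ℝ, ∀ x ∈ I, h x - h z ≤ M * (g x - g z) := by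
  obtain ⟨m, hm⟩ := hle.exists_mul_sub_le_sub hI hhc hgc hh hg.monotoneOn hz
  obtain ⟨x, hxz, hx⟩ := Eventually.exists_lt hz
  have hm0 : 0 < m := by
    have hzI := mem_of_mem_nhds hz
    exact pos_of_mul_neg_left ((hm x hx).trans_lt (sub_neg.2 (hg hx hzI hxz)))
      (sub_neg.2 (hh hx hzI hxz)).le
  exact ⟨m⁻¹, fun x hx => (le_inv_mul_iff₀ hm0).2 (hm x hx)⟩

theorem differentiableAt_of_qamLE_of_qamLE (hI : I.OrdConnected) (hfc : ContinuousOn f I)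
    (hgc : ContinuousOn g I) (hhc : ContinuousOn h I) (hf : StrictMonoOn f I)
    (hg : StrictMonoOn g I) (hh : StrictMonoOn h I) (hfh : qamLE I f h) (hhg : qamLE I h g)
    {z : ℝ} (hz : I ∈ nhds z) (hfd : DifferentiableAt ℝ f z) (hgd : DifferentiableAt ℝ g z) :
    DifferentiableAt ℝ h z := by
  obtain ⟨m, hm⟩ := hfh.exists_mul_sub_le_sub hI hfc hhc hf hh.monotoneOn hz
  obtain ⟨M, hM⟩ := hhg.exists_sub_le_mul_sub hI hhc hgc hh hg hz
  refine differentiableAt_of_le_of_le (u := fun x => h z + m * (f x - f z))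
    (v := fun x => h z + M * (g x - g z)) (by fun_prop) (by fun_prop) (by simp) (by simp) ?_ ?_
  · filter_upwards [hz] with x hx
    linarith [hm x hx]
  · filter_upwards [hz] with x hx
    linarith [hM x hx]

end QuasiArithmeticMean

theorem differentiable_interval_type_general {I : Set ℝ} (hI : I.OrdConnected) {f g h : ℝ → ℝ}
    (hfc : ContinuousOn f I) (hgc : ContinuousOn g I) (hhc : ContinuousOn h I)
    (hfm : StrictMonoOrAntiOn f I) (hgm : StrictMonoOrAntiOn g I)
    (hhm : StrictMonoOrAntiOn h I) (hfh : qamLE I f h) (hhg : qamLE I h g) {z : ℝ}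
    (hz : I ∈ nhds z) (hfd : DifferentiableAt ℝ f z) (hgd : DifferentiableAt ℝ g z) :
    DifferentiableAt ℝ h z := by
  wlog hf : StrictMonoOn f I generalizing f
  · have hf_neg : StrictMonoOn (-f) I := (hfm.resolve_left hf).neg
    exact this hfc.neg (.inl hf_neg) (qamLE_neg_left.2 hfh) hfd.neg hf_neg
  wlog hg : StrictMonoOn g I generalizing g
  · have hg_neg : StrictMonoOn (-g) I := (hgm.resolve_left hg).neg
    exact this hgc.neg (.inl hg_neg) (qamLE_neg_right.2 hhg) hgd.neg hg_neg
  wlog hh : StrictMonoOn h I generalizing h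
  · have hh_neg : StrictMonoOn (-h) I := (hhm.resolve_left hh).neg
    exact differentiableAt_neg_iff.1 <| this hhc.neg (.inl hh_neg) (qamLE_neg_right.2 hfh)
      (qamLE_neg_left.2 hhg) hh_neg
  exact differentiableAt_of_qamLE_of_qamLE hI hfc hgc hhc hf hg hh hfh hhg hz hfd hgd

/-- Corollary 3: on an open interval `I`, if `f, g` are differentiable
at every point of `I` and `A^[f] ≤ A^[h] ≤ A^[g]`, then `h` is differentiable at
every point of `I`. -/
theorem differentiable_interval_type
    (I : Set ℝ) (hI : I.OrdConnected) (hIo : IsOpen I)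
    (hInontriv : ∃ x ∈ I, ∃ y ∈ I, x < y)
    (f g h : ℝ → ℝ)
    (hfc : ContinuousOn f I) (hgc : ContinuousOn g I) (hhc : ContinuousOn h I)
    (hfm : StrictMonoOrAntiOn f I) (hgm : StrictMonoOrAntiOn g I)
    (hhm : StrictMonoOrAntiOn h I)
    (hfd : ∀ x ∈ I, DifferentiableAt ℝ f x)
    (hgd : ∀ x ∈ I, DifferentiableAt ℝ g x)
    (hle₁ : qamLE I f h) (hle₂ : qamLE I h g) :
    ∀ x ∈ I, DifferentiableAt ℝ h x :=
  fun z hz => differentiable_interval_type_general hI hfc hgc hhc hfm hgm hhm hle₁ hle₂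
    (hIo.mem_nhds hz) (hfd z hz) (hgd z hz)
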